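/- Let (X,p) be a 0-complete partial metric space and T : X → X satisfy p(Tx,Ty) ≤ φ(p(x,y)) for all x,y ∈ X, where φ : [0,∞) → [0,∞) is increasing, f(t) = t - φ(t) is increasing with f^{-1} right continuous at 0, and lim_{n→∞} φ^n(t) = 0 for all t ≥ 0. Then T has a unique fixed point z ∈ X, p(z,z) = 0, and for each x ∈ X the sequence (T^n x) converges to z in the metric p^s. -/

import Mathlib

open Filter Topology

structure IsPartialMetric {X : Type*} (p : X → X → ℝ) : Prop where
  nonneg : ∀ x y, 0 ≤ p x y
  symm : ∀ x y, p x y = p y x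
  eq_of : ∀ x y, p x x = p x y → p y y = p x y → x = y
  self_le : ∀ x y, p x x ≤ p x y
  triangle : ∀ x y z, p x z + p y y ≤ p x y + p y z

/-- The associated metric pˢ(x,y) = 2 p(x,y) - p(x,x) - p(y,y). -/
def pS {X : Type*} (p : X → X → ℝ) (x y : X) : ℝ := 2 * p x y - p x x - p y y

/-- 0-completeness: every 0-Cauchy sequence (lim_{n,m} p(x_n,x_m) = 0) converges
wrt pˢ to a point z with p(z,z) = 0. -/
def IsZeroCompletePMS {X : Type*} (p : X → X → ℝ) : Prop :=
  ∀ x : ℕ → X, Tendsto (fun nm : ℕ × ℕ => p (x nm.1) (x nm.2)) atTop (𝓝 0) →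
    ∃ z : X, p z z = 0 ∧ Tendsto (fun n => pS p z (x n)) atTop (𝓝 0)

theorem phi_contraction_zero_complete {X : Type*} [Nonempty X] {p : X → X → ℝ}
    (hp : IsPartialMetric p) (hcomp : IsZeroCompletePMS p) (T : X → X) (φ g : ℝ → ℝ)
    (hφ_nonneg : ∀ t : ℝ, 0 ≤ t → 0 ≤ φ t)
    (hφ_mono : ∀ s t : ℝ, 0 ≤ s → s ≤ t → φ s ≤ φ t)
    (hf_mono : ∀ s t : ℝ, 0 ≤ s → s ≤ t → s - φ s ≤ t - φ t)
    (hg_left : ∀ s : ℝ, 0 ≤ s → g s - φ (g s) ≤ s)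
    (hg_ge : ∀ s : ℝ, 0 ≤ s → s ≤ g s)
    (hg0 : g 0 = 0)
    (hg_rc : Tendsto g (nhdsWithin 0 (Set.Ici 0)) (𝓝 0))
    (hiter : ∀ t : ℝ, 0 ≤ t → Tendsto (fun n => φ^[n] t) atTop (𝓝 0))
    (hT : ∀ x y, p (T x) (T y) ≤ φ (p x y)) :
    ∃ z : X, T z = z ∧ (∀ w : X, T w = w → w = z) ∧ p z z = 0 ∧
      ∀ x : X, Tendsto (fun n => pS p (T^[n] x) z) atTop (𝓝 0) := by
  have hlt : ∀ t : ℝ, 0 < t → φ t < t := by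
    intro t ht
    by_contra hcon
    have hcon : t ≤ φ t := not_lt.mp hcon
    have hn : ∀ n : ℕ, t ≤ φ^[n] t := by
      intro n
      induction n with
      | zero => simp
      | succ k ih =>
        rw [Function.iterate_succ_apply']
        exact hcon.trans (hφ_mono _ _ ht.le ih)
    have := ge_of_tendsto' (hiter t ht.le) hn
    linarith
  have hle : ∀ t : ℝ, 0 ≤ t → φ t ≤ t := by
    intro t ht
    rcases ht.eq_or_lt with h | h
    · subst h
      refine le_of_forall_pos_le_add fun ε hε => ?_
      have h1 := hφ_mono 0 ε le_rfl hε.le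
      have h2 := hlt ε hε
      linarith
    · exact (hlt t h).le
  have hit0 : ∀ x y (n : ℕ), p (T^[n] x) (T^[n] y) ≤ φ^[n] (p x y) := by
    intro x y n
    induction n with
    | zero => simp
    | succ k ih =>
      rw [Function.iterate_succ_apply', Function.iterate_succ_apply',
        Function.iterate_succ_apply']
      exact (hT _ _).trans (hφ_mono _ _ (hp.nonneg _ _) ih)
  have hit : ∀ x y, Tendsto (fun n : ℕ => p (T^[n] x) (T^[n] y)) atTop (𝓝 0) := fun x y =>
    squeeze_zero (fun n => hp.nonneg _ _) (hit0 x y) (hiter _ (hp.nonneg _ _))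
  obtain ⟨x0⟩ := ‹Nonempty X›
  have hcau : Tendsto (fun nm : ℕ × ℕ => p (T^[nm.1] x0) (T^[nm.2] x0)) atTop (𝓝 0) := by
    rw [Metric.tendsto_atTop]
    intro δ hδ
    obtain ⟨ε, hε, hεδ⟩ : ∃ ε : ℝ, 0 < ε ∧ 2 * ε < δ := ⟨δ / 4, by linarith, by linarith⟩
    have h1 := hlt ε hε
    have h0 := hφ_nonneg ε hε.le
    obtain ⟨n, hn⟩ := ((hit x0 (T x0)).eventually
      (gt_mem_nhds (show (0 : ℝ) < ε - φ ε by linarith))).exists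
    rw [← Function.iterate_succ_apply, Function.iterate_succ_apply'] at hn
    have key : ∀ k : ℕ, p (T^[n] x0) (T^[n + k] x0) ≤ ε := by
      intro k
      induction k with
      | zero =>
        have := hp.self_le (T^[n] x0) (T (T^[n] x0))
        simp only [Nat.add_zero]
        linarith
      | succ k ih =>
        rw [← Nat.add_assoc, Function.iterate_succ_apply']
        have a := hp.triangle (T^[n] x0) (T (T^[n] x0)) (T (T^[n + k] x0))
        have b := hp.nonneg (T (T^[n] x0)) (T (T^[n] x0))
        have c := hT (T^[n] x0) (T^[n + k] x0)
        have d := hφ_mono _ _ (hp.nonneg _ _) ih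
        linarith
    refine ⟨(n, n), ?_⟩
    rintro ⟨a, b⟩ hab
    obtain ⟨ha, hb⟩ : n ≤ a ∧ n ≤ b := hab
    obtain ⟨i, rfl⟩ := Nat.exists_eq_add_of_le ha
    obtain ⟨j, rfl⟩ := Nat.exists_eq_add_of_le hb
    have e1 := key i
    have e2 := key j
    rw [hp.symm] at e1
    have e3 := hp.triangle (T^[n + i] x0) (T^[n] x0) (T^[n + j] x0)
    have e4 := hp.nonneg (T^[n] x0) (T^[n] x0)
    rw [Real.dist_eq, sub_zero, abs_of_nonneg (hp.nonneg _ _)]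
    simp only
    linarith
  obtain ⟨z, hz, hzl⟩ := hcomp (fun n => T^[n] x0) hcau
  have hzx : Tendsto (fun n : ℕ => p z (T^[n] x0)) atTop (𝓝 0) := by
    have h := (hzl.add (hit x0 x0)).div_const 2
    simp only [add_zero, zero_div] at h
    refine h.congr fun n => ?_
    simp only [pS, hz]
    ring
  have hzT : p z (T z) = 0 := by
    refine le_antisymm ?_ (hp.nonneg _ _)
    have h := ((tendsto_add_atTop_iff_nat 1).2 hzx).add hzx
    rw [add_zero] at h
    refine ge_of_tendsto' h fun n => ?_
    rw [Function.iterate_succ_apply']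
    have a := hp.triangle z (T (T^[n] x0)) (T z)
    have b := hp.nonneg (T (T^[n] x0)) (T (T^[n] x0))
    have c := hT (T^[n] x0) z
    have d := hle _ (hp.nonneg (T^[n] x0) z)
    rw [hp.symm (T^[n] x0) z] at c d
    linarith
  have hself : ∀ w, p z w = 0 → z = w := by
    intro w hw
    refine hp.eq_of z w (by rw [hz, hw]) ?_
    have a := hp.self_le w z
    rw [hp.symm w z] at a
    have b := hp.nonneg w w
    linarith
  have hfix : T z = z := (hself _ hzT).symm
  have hconv : ∀ x, Tendsto (fun n : ℕ => p (T^[n] x) z) atTop (𝓝 0) := by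
    intro x
    refine (hit x z).congr fun n => ?_
    rw [Function.iterate_fixed hfix]
  refine ⟨z, hfix, ?_, hz, ?_⟩
  · intro w hw
    have h := hconv w
    simp only [Function.iterate_fixed hw] at h
    have h2 := tendsto_nhds_unique h tendsto_const_nhds
    exact (hself w (by rw [hp.symm]; exact h2.symm)).symm
  · intro x
    have h := ((hconv x).const_mul 2).sub (hit x x)
    simp only [mul_zero, sub_zero] at h
    refine h.congr fun n => ?_
    simp only [pS, hz, sub_zero]
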